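/- Let d ≥ 2 and let p be a symmetric probability mass function on ℤ with 0 < Σ_{j∈ℤ} j² p(j) < ∞. Let H be the almost-sure limit of the spherical averages H_r of the free height field with increment law p on the rooted Cayley tree of order d. Then there exists a constant c > 0 such that for all t ∈ ℝ the characteristic function of H satisfies |E[exp(itH)]| ≤ exp( −c · min(t², |t|) ). -/

import Mathlib

open MeasureTheory ProbabilityTheory Filter Finset Topology

noncomputable section

/-- A non-root vertex of the rooted Cayley tree of order `d`: the first step from the
root is one of `d+1` children, every further step one of `d` children. -/
abbrev Vertex (d : ℕ) : Type := Fin (d + 1) × List (Fin d)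

/-- depth of a non-root vertex -/
def vdepth {d : ℕ} (v : Vertex d) : ℕ := v.2.length + 1

/-- the sphere `W_r` of radius `r ≥ 1`: all vertices of depth `r` -/
def sphereW (d r : ℕ) : Finset (Vertex d) :=
  (Finset.univ : Finset (Fin (d + 1) × (Fin (r - 1) → Fin d))).image
    (fun x => (x.1, List.ofFn x.2))

/-- height at `v`: sum of the increments along the path from the root to `v`
(the prefixes of length `0,…,|v.2|` of the step list of `v` enumerate that path). -/
def heightAt {d : ℕ} {Ω : Type*} (Y : Vertex d → Ω → ℝ) (v : Vertex d) (ω : Ω) : ℝ :=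
  ∑ k ∈ Finset.range (v.2.length + 1), Y (v.1, v.2.take k) ω

/-- spherical average `H_r` of the heights at depth `r` -/
def sphAvg (d : ℕ) {Ω : Type*} (Y : Vertex d → Ω → ℝ) (r : ℕ) (ω : Ω) : ℝ :=
  (((d + 1) * d ^ (r - 1) : ℕ) : ℝ)⁻¹ * ∑ v ∈ sphereW d r, heightAt Y v ω

/-!
By the tree structure `H_r = ∑_{|v| ≤ r} Y_v / |W_{|v|}|`, a sum of independent terms. Hence for
every `k` the `|W_k|` terms of the `k`-th sphere alone give
`|E[exp(itH)]| ≤ |φ(t / |W_k|)| ^ |W_k|`, where `φ` is the characteristic function of the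
increments. Since `|φ(s)| ≤ exp(-a s²)` for small `s` (a truncated second moment of the symmetrized
law suffices for this), the bound is `exp(-a t² / |W_k|)` as soon as `|W_k| ≥ |t| / δ`. As `|W_k|`
grows geometrically, `k` can be chosen with `|W_k|` comparable to `max(1, |t|)`.
-/

section Symmetrization

/-- The symmetrization of a measure: for a probability measure `μ`, the law of `X - X'` with `X`
and `X'` independent of law `μ`. Its characteristic function is real and controls the modulus of
that of `μ`. -/
def symmetrization {G : Type*} [AddGroup G] [MeasurableSpace G] (μ : Measure G) : Measure G :=
  (μ.prod μ).map fun x => x.1 - x.2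

lemma isProbabilityMeasure_symmetrization {G : Type*} [AddGroup G] [MeasurableSpace G]
    [MeasurableSub₂ G] (μ : Measure G) [IsProbabilityMeasure μ] :
    IsProbabilityMeasure (symmetrization μ) :=
  Measure.isProbabilityMeasure_map (by fun_prop)

lemma eq_dirac_of_ae_eq {α : Type*} [MeasurableSpace α] {μ : Measure α} [IsProbabilityMeasure μ]
    {x : α} (h : ∀ᵐ y ∂μ, y = x) : μ = Measure.dirac x := by
  simpa using (hasLaw_dirac_of_ae_eq (X := id) h).map_eq

lemma symmetrization_compl_zero_ne_zero {G : Type*} [AddGroup G] [MeasurableSpace G]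
    [MeasurableSub₂ G] [MeasurableSingletonClass G] {μ : Measure G} [IsProbabilityMeasure μ]
    (hμ : ∀ x, μ ≠ Measure.dirac x) : symmetrization μ {0}ᶜ ≠ 0 := by
  intro h
  have hdiag : ∀ᵐ x ∂μ.prod μ, x.1 - x.2 = 0 :=
    ae_of_ae_map (p := fun z => z = 0) (by fun_prop) h
  obtain ⟨x, hx⟩ := (Measure.ae_ae_of_ae_prod hdiag).exists
  exact hμ x (eq_dirac_of_ae_eq (hx.mono fun y hy => (sub_eq_zero.1 hy).symm))

lemma charFun_symmetrization {E : Type*} [NormedAddCommGroup E] [InnerProductSpace ℝ E]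
    [MeasurableSpace E] [BorelSpace E] [SecondCountableTopology E] (μ : Measure E) [SFinite μ]
    (t : E) : charFun (symmetrization μ) t = (‖charFun μ t‖ ^ 2 : ℝ) := by
  have hexp (x : E × E) : Complex.exp ((inner ℝ (x.1 - x.2) t : ℝ) * Complex.I) =
      Complex.exp ((inner ℝ x.1 t : ℝ) * Complex.I) *
        Complex.exp ((inner ℝ x.2 (-t) : ℝ) * Complex.I) := by
    rw [← Complex.exp_add, inner_sub_left, inner_neg_right]
    push_cast
    ring_nf
  calc charFun (symmetrization μ) t = charFun μ t * charFun μ (-t) := by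
        rw [symmetrization, charFun_apply, integral_map (by fun_prop) (by fun_prop)]
        simp only [hexp]
        exact integral_prod_mul (fun x => Complex.exp ((inner ℝ x t : ℝ) * Complex.I))
          fun x => Complex.exp ((inner ℝ x (-t) : ℝ) * Complex.I)
    _ = (‖charFun μ t‖ ^ 2 : ℝ) := by
        rw [charFun_neg, Complex.mul_conj, Complex.normSq_eq_norm_sq]

end Symmetrization

section GaussianDecay

variable {μ : Measure ℝ}

lemma exists_setIntegral_sq_pos [IsFiniteMeasure μ] (hμ : μ {0}ᶜ ≠ 0) :
    ∃ r : ℝ, 0 < r ∧ 0 < ∫ x in Set.Icc (-r) r, x ^ 2 ∂μ := by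
  have hcover : {0}ᶜ ⊆ ⋃ n : ℕ, {0}ᶜ ∩ Set.Icc (-(n + 1 : ℝ)) (n + 1) := fun x hx => by
    obtain ⟨n, hn⟩ := exists_nat_ge |x|
    exact Set.mem_iUnion.2 ⟨n, hx, abs_le.1 (hn.trans (by linarith))⟩
  obtain ⟨n, hn⟩ := exists_measure_pos_of_not_measure_iUnion_null
    fun h => hμ (measure_mono_null hcover h)
  refine ⟨n + 1, by positivity, ?_⟩
  rw [setIntegral_pos_iff_support_of_nonneg_ae (ae_of_all _ sq_nonneg)
    (Continuous.integrableOn_Icc (by fun_prop))]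
  convert hn using 3
  ext x
  simp

lemma re_charFun_eq_integral_cos [IsFiniteMeasure μ] (s : ℝ) :
    (charFun μ s).re = ∫ x, Real.cos (s * x) ∂μ := by
  have hint : Integrable (fun x : ℝ => Complex.exp ((s * x : ℝ) * Complex.I)) μ :=
    .of_bound (by fun_prop) 1 (ae_of_all _ fun x => (Complex.norm_exp_ofReal_mul_I _).le)
  calc (charFun μ s).re = (∫ x, Complex.exp ((s * x : ℝ) * Complex.I) ∂μ).re := by
        simp only [charFun_apply_real, Complex.ofReal_mul]
    _ = ∫ x, (Complex.exp ((s * x : ℝ) * Complex.I)).re ∂μ := (integral_re hint).symm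
    _ = ∫ x, Real.cos (s * x) ∂μ := by simp only [Complex.exp_ofReal_mul_I_re]

lemma re_charFun_le_one_sub [IsProbabilityMeasure μ] {r s : ℝ} (hs : |s| * r ≤ Real.pi) :
    (charFun μ s).re ≤ 1 - 2 / Real.pi ^ 2 * s ^ 2 * ∫ x in Set.Icc (-r) r, x ^ 2 ∂μ := by
  have hcos : Integrable (fun x => Real.cos (s * x)) μ :=
    .of_bound (by fun_prop) 1 (ae_of_all _ fun x => Real.abs_cos_le_one _)
  have hsq : Integrable ((Set.Icc (-r) r).indicator fun x => 2 / Real.pi ^ 2 * (s * x) ^ 2) μ :=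
    (Continuous.integrableOn_Icc (by fun_prop)).integrable_indicator measurableSet_Icc
  have hpointwise (x : ℝ) : Real.cos (s * x) ≤
      1 - (Set.Icc (-r) r).indicator (fun x => 2 / Real.pi ^ 2 * (s * x) ^ 2) x := by
    by_cases hx : x ∈ Set.Icc (-r) r
    · rw [Set.indicator_of_mem hx]
      refine Real.cos_le_one_sub_mul_cos_sq (le_trans ?_ hs)
      rw [abs_mul]
      exact mul_le_mul_of_nonneg_left (abs_le.2 hx) (abs_nonneg s)
    · simpa [Set.indicator_of_notMem hx] using Real.cos_le_one _
  calc (charFun μ s).re = ∫ x, Real.cos (s * x) ∂μ := re_charFun_eq_integral_cos s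
    _ ≤ ∫ x, (1 - (Set.Icc (-r) r).indicator (fun x => 2 / Real.pi ^ 2 * (s * x) ^ 2) x) ∂μ :=
        integral_mono hcos ((integrable_const 1).sub hsq) hpointwise
    _ = 1 - 2 / Real.pi ^ 2 * s ^ 2 * ∫ x in Set.Icc (-r) r, x ^ 2 ∂μ := by
        rw [integral_sub (integrable_const 1) hsq, integral_indicator measurableSet_Icc]
        simp [mul_pow, ← mul_assoc, integral_const_mul]

lemma exists_norm_charFun_le_exp [IsProbabilityMeasure μ] (hμ : ∀ x, μ ≠ Measure.dirac x) :
    ∃ a δ : ℝ, 0 < a ∧ 0 < δ ∧ ∀ s, |s| ≤ δ → ‖charFun μ s‖ ≤ Real.exp (-a * s ^ 2) := by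
  have := isProbabilityMeasure_symmetrization μ
  obtain ⟨r, hr, hpos⟩ := exists_setIntegral_sq_pos (symmetrization_compl_zero_ne_zero hμ)
  set m := ∫ x in Set.Icc (-r) r, x ^ 2 ∂symmetrization μ
  refine ⟨m / Real.pi ^ 2, Real.pi / r, by positivity, by positivity, fun s hs => ?_⟩
  refine le_of_sq_le_sq ?_ (Real.exp_pos _).le
  calc ‖charFun μ s‖ ^ 2 = (charFun (symmetrization μ) s).re := by
        rw [charFun_symmetrization, Complex.ofReal_re]
    _ ≤ 1 - 2 / Real.pi ^ 2 * s ^ 2 * m := re_charFun_le_one_sub ((le_div_iff₀ hr).1 hs)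
    _ ≤ Real.exp (-(2 / Real.pi ^ 2 * s ^ 2 * m)) := Real.one_sub_le_exp_neg _
    _ = Real.exp (-(m / Real.pi ^ 2) * s ^ 2) ^ 2 := by
        rw [← Real.exp_nat_mul]
        push_cast
        ring_nf

lemma exists_geometric_scale {A b : ℝ} (hA : 0 < A) (hb : 1 < b) :
    ∃ c : ℝ, 0 < c ∧ ∀ x, 0 ≤ x → ∃ k : ℕ, x ≤ A * b ^ k ∧ c * min (x ^ 2) x ≤ x ^ 2 / b ^ k := by
  have : 0 < b := one_pos.trans hb
  refine ⟨min 1 (A / b), by positivity, fun x hx => ?_⟩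
  rcases le_total x A with hxA | hAx
  · refine ⟨0, by simpa using hxA, ?_⟩
    calc min 1 (A / b) * min (x ^ 2) x ≤ 1 * x ^ 2 := by
          gcongr <;> exact min_le_left _ _
      _ = x ^ 2 / b ^ 0 := by simp
  · obtain ⟨k, hk, hk'⟩ := exists_nat_pow_near ((one_le_div hA).2 hAx) hb
    rw [le_div_iff₀ hA] at hk
    refine ⟨k + 1, ((div_lt_iff₀' hA).1 hk').le, ?_⟩
    calc min 1 (A / b) * min (x ^ 2) x ≤ A / b * x := by
          gcongr <;> exact min_le_right _ _
      _ = b ^ k * A * x / b ^ (k + 1) := by field_simp; ring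
      _ ≤ x * x / b ^ (k + 1) := by gcongr
      _ = x ^ 2 / b ^ (k + 1) := by rw [sq]

lemma exists_norm_charFun_pow_le_exp [IsProbabilityMeasure μ] (hμ : ∀ x, μ ≠ Measure.dirac x)
    {m d : ℕ} (hm : 0 < m) (hd : 1 < d) :
    ∃ c : ℝ, 0 < c ∧ ∀ t : ℝ, ∃ k : ℕ,
      ‖charFun μ (((m * d ^ k : ℕ) : ℝ)⁻¹ * t)‖ ^ (m * d ^ k) ≤
        Real.exp (-c * min (t ^ 2) |t|) := by
  obtain ⟨a, δ, ha, hδ, hdecay⟩ := exists_norm_charFun_le_exp hμ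
  obtain ⟨c, hc, hscale⟩ := exists_geometric_scale (A := δ * m) (by positivity)
    (Nat.one_lt_cast.2 hd)
  refine ⟨a / m * c, by positivity, fun t => ?_⟩
  obtain ⟨k, hk, hck⟩ := hscale |t| (abs_nonneg t)
  rw [sq_abs] at hck
  set N : ℕ := m * d ^ k with hN
  have hN0 : (0 : ℝ) < N := by positivity
  have hsmall : |(N : ℝ)⁻¹ * t| ≤ δ := by
    rw [abs_mul, abs_of_pos (inv_pos.2 hN0), inv_mul_le_iff₀ hN0, hN]
    push_cast
    linarith
  have hexponent : a / m * c * min (t ^ 2) |t| ≤ a * t ^ 2 / N :=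
    calc a / m * c * min (t ^ 2) |t| = a / m * (c * min (t ^ 2) |t|) := mul_assoc _ _ _
      _ ≤ a / m * (t ^ 2 / d ^ k) := by gcongr
      _ = a * t ^ 2 / N := by rw [hN]; push_cast; field_simp
  refine ⟨k, ?_⟩
  calc ‖charFun μ ((N : ℝ)⁻¹ * t)‖ ^ N
    _ ≤ Real.exp (-a * ((N : ℝ)⁻¹ * t) ^ 2) ^ N := by gcongr; exact hdecay _ hsmall
    _ = Real.exp (-(a * t ^ 2 / N)) := by
        rw [← Real.exp_nat_mul]
        congr 1
        field_simp
    _ ≤ Real.exp (-(a / m * c) * min (t ^ 2) |t|) := by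
        rw [neg_mul]
        gcongr

end GaussianDecay

section RandomVariables

variable {Ω E : Type*} [MeasurableSpace Ω] {P : Measure Ω} [NormedAddCommGroup E]
  [InnerProductSpace ℝ E] [MeasurableSpace E] [BorelSpace E]

lemma norm_charFun_map_sum_le_prod [SecondCountableTopology E] {ι : Type*} {X : ι → Ω → E}
    {s u : Finset ι} (hX : ∀ i, AEMeasurable (X i) P) (hindep : iIndepFun X P) (hus : u ⊆ s)
    (t : E) :
    ‖charFun (P.map (∑ i ∈ s, X i)) t‖ ≤ ∏ i ∈ u, ‖charFun (P.map (X i)) t‖ := by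
  have := hindep.isProbabilityMeasure
  have hprob (i : ι) : IsProbabilityMeasure (P.map (X i)) :=
    Measure.isProbabilityMeasure_map (hX i)
  rw [iIndepFun.charFun_map_finsetSum_eq_prod (fun i _ => hX i) (hindep.restrict _),
    Finset.prod_apply, norm_prod]
  exact Finset.prod_le_prod_of_subset_of_le_one hus (fun _ _ => norm_nonneg _)
    fun _ _ _ => norm_charFun_le_one _

lemma tendsto_charFun_map_of_ae_tendsto [IsProbabilityMeasure P] {ι : Type*} {l : Filter ι}
    [l.NeBot] [l.IsCountablyGenerated] {X : ι → Ω → E} {Z : Ω → E}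
    (hX : ∀ i, AEMeasurable (X i) P) (hlim : ∀ᵐ ω ∂P, Tendsto (fun i => X i ω) l (𝓝 (Z ω)))
    (t : E) : Tendsto (fun i => charFun (P.map (X i)) t) l (𝓝 (charFun (P.map Z) t)) := by
  have hZ : AEMeasurable Z P := aemeasurable_of_tendsto_metrizable_ae l hX hlim
  have hdistr := (tendstoInDistribution_of_ae_tendsto hX hZ hlim).tendsto
  simp_rw [charFun_eq_integral_innerProbChar]
  exact (ProbabilityMeasure.tendsto_iff_forall_integral_rclike_tendsto ℂ).1 hdistr _

end RandomVariables

section Tree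

variable {d : ℕ}

/-- The `x`-th child of the non-root vertex `v`. -/
def child (v : Vertex d) (x : Fin d) : Vertex d := (v.1, v.2 ++ [x])

/-- The non-root vertices of depth at most `n`. -/
def ballW (d n : ℕ) : Finset (Vertex d) := (range n).biUnion fun k => sphereW d (k + 1)

lemma sum_sphereW_succ {M : Type*} [AddCommMonoid M] (n : ℕ) (f : Vertex d → M) :
    ∑ v ∈ sphereW d (n + 1), f v =
      ∑ x : Fin (d + 1) × (Fin n → Fin d), f (x.1, List.ofFn x.2) := by
  refine Finset.sum_image fun x _ y _ hxy => ?_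
  obtain ⟨hroot, hsteps⟩ := Prod.ext_iff.1 hxy
  exact Prod.ext hroot (List.ofFn_injective hsteps)

lemma card_sphereW_succ (d n : ℕ) : #(sphereW d (n + 1)) = (d + 1) * d ^ n := by
  rw [Finset.card_eq_sum_ones, sum_sphereW_succ]
  simp

lemma vdepth_eq_of_mem_sphereW_succ {n : ℕ} {v : Vertex d} (hv : v ∈ sphereW d (n + 1)) :
    vdepth v = n + 1 := by
  obtain ⟨x, -, rfl⟩ := Finset.mem_image.1 hv
  simp [vdepth]

lemma sum_sphereW_succ_succ {M : Type*} [AddCommMonoid M] (n : ℕ) (f : Vertex d → M) :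
    ∑ v ∈ sphereW d (n + 2), f v = ∑ v ∈ sphereW d (n + 1), ∑ x, f (child v x) := by
  rw [sum_sphereW_succ, sum_sphereW_succ, Fintype.sum_prod_type, Fintype.sum_prod_type]
  refine Finset.sum_congr rfl fun i _ => ?_
  rw [← (Fin.snocEquiv fun _ : Fin (n + 1) => Fin d).sum_comp, Fintype.sum_prod_type,
    Finset.sum_comm]
  refine Finset.sum_congr rfl fun g _ => Finset.sum_congr rfl fun x _ => ?_
  simp [child, Fin.snocEquiv, List.ofFn_succ_last, -List.ofFn_succ]

lemma sum_ballW_succ {M : Type*} [AddCommMonoid M] (n : ℕ) (f : Vertex d → M) :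
    ∑ v ∈ ballW d (n + 1), f v = ∑ v ∈ ballW d n, f v + ∑ v ∈ sphereW d (n + 1), f v := by
  have hdisj : Disjoint (sphereW d (n + 1)) (ballW d n) := by
    refine Finset.disjoint_left.2 fun v hv hball => ?_
    obtain ⟨k, hk, hvk⟩ := Finset.mem_biUnion.1 hball
    have := vdepth_eq_of_mem_sphereW_succ hv
    have := vdepth_eq_of_mem_sphereW_succ hvk
    have := Finset.mem_range.1 hk
    omega
  rw [ballW, Finset.range_add_one, Finset.biUnion_insert, ← ballW, Finset.sum_union hdisj, add_comm]

variable {Ω : Type*} (Y : Vertex d → Ω → ℝ)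

lemma heightAt_child (v : Vertex d) (x : Fin d) (ω : Ω) :
    heightAt Y (child v x) ω = heightAt Y v ω + Y (child v x) ω := by
  simp only [heightAt, child, List.length_append, List.length_singleton]
  rw [Finset.sum_range_succ, List.take_of_length_le (by simp)]
  congr 1
  refine Finset.sum_congr rfl fun k hk => ?_
  rw [List.take_append_of_le_length (Nat.lt_succ_iff.1 (Finset.mem_range.1 hk))]

lemma sphAvg_one (ω : Ω) :
    sphAvg d Y 1 ω = ∑ v ∈ sphereW d 1, (#(sphereW d 1) : ℝ)⁻¹ * Y v ω := by
  rw [sphAvg, ← card_sphereW_succ, Finset.mul_sum, sum_sphereW_succ 0, sum_sphereW_succ 0]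
  simp [heightAt]

lemma sphAvg_succ_succ (hd : 0 < d) (n : ℕ) (ω : Ω) :
    sphAvg d Y (n + 2) ω = sphAvg d Y (n + 1) ω +
      ∑ v ∈ sphereW d (n + 2), (#(sphereW d (n + 2)) : ℝ)⁻¹ * Y v ω := by
  have hcard : #(sphereW d (n + 2)) = d * #(sphereW d (n + 1)) := by
    rw [card_sphereW_succ, card_sphereW_succ, pow_succ]
    ring
  have hheight : ∑ v ∈ sphereW d (n + 2), heightAt Y v ω =
      d * ∑ v ∈ sphereW d (n + 1), heightAt Y v ω + ∑ v ∈ sphereW d (n + 2), Y v ω := by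
    simp only [sum_sphereW_succ_succ, heightAt_child, Finset.sum_add_distrib, Finset.sum_const,
      Finset.card_univ, Fintype.card_fin, nsmul_eq_mul, Finset.mul_sum]
  simp only [sphAvg, Nat.add_sub_cancel, Nat.reduceSubDiff, ← card_sphereW_succ, hheight, mul_add,
    ← Finset.mul_sum]
  rw [hcard]
  push_cast
  field_simp

lemma sphAvg_succ_eq_sum_ballW (hd : 0 < d) (n : ℕ) (ω : Ω) :
    sphAvg d Y (n + 1) ω =
      ∑ v ∈ ballW d (n + 1), (#(sphereW d (vdepth v)) : ℝ)⁻¹ * Y v ω := by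
  have hsphere (k : ℕ) : ∑ v ∈ sphereW d (k + 1), (#(sphereW d (vdepth v)) : ℝ)⁻¹ * Y v ω =
      ∑ v ∈ sphereW d (k + 1), (#(sphereW d (k + 1)) : ℝ)⁻¹ * Y v ω :=
    Finset.sum_congr rfl fun v hv => by rw [vdepth_eq_of_mem_sphereW_succ hv]
  induction n with
  | zero => rw [sum_ballW_succ, hsphere, ← sphAvg_one]; simp [ballW]
  | succ n ih => rw [sum_ballW_succ, hsphere, ← ih, sphAvg_succ_succ Y hd]

end Tree

section HeightField

variable {Ω : Type*} [MeasurableSpace Ω] {P : Measure Ω} {d : ℕ} {μ : Measure ℝ}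
  {Y : Vertex d → Ω → ℝ}

lemma aemeasurable_sphAvg (hY : ∀ v, AEMeasurable (Y v) P) (r : ℕ) :
    AEMeasurable (sphAvg d Y r) P := by
  unfold sphAvg heightAt
  fun_prop

lemma norm_charFun_sphAvg_le (hd : 0 < d) (hY : ∀ v, HasLaw (Y v) μ P) (hindep : iIndepFun Y P)
    {k n : ℕ} (hkn : k ≤ n) (t : ℝ) :
    ‖charFun (P.map (sphAvg d Y (n + 1))) t‖ ≤
      ‖charFun μ ((#(sphereW d (k + 1)) : ℝ)⁻¹ * t)‖ ^ #(sphereW d (k + 1)) := by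
  set X : Vertex d → Ω → ℝ := fun v ω => (#(sphereW d (vdepth v)) : ℝ)⁻¹ * Y v ω with hX
  have hsum : sphAvg d Y (n + 1) = ∑ v ∈ ballW d (n + 1), X v := by
    ext ω
    rw [Finset.sum_apply, sphAvg_succ_eq_sum_ballW Y hd]
  have hsub : sphereW d (k + 1) ⊆ ballW d (n + 1) :=
    Finset.subset_biUnion_of_mem (fun k => sphereW d (k + 1))
      (Finset.mem_range.2 (Nat.lt_succ_of_le hkn))
  have hcharFun {v : Vertex d} (hv : v ∈ sphereW d (k + 1)) :
      charFun (P.map (X v)) t = charFun μ ((#(sphereW d (k + 1)) : ℝ)⁻¹ * t) := by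
    rw [hX, charFun_map_mul_comp (hY v).aemeasurable, (hY v).map_eq,
      vdepth_eq_of_mem_sphereW_succ hv]
  rw [hsum, ← Finset.prod_const]
  refine (norm_charFun_map_sum_le_prod (fun v => (hY v).aemeasurable.const_mul _)
    (hindep.comp _ fun v => measurable_const_mul _) hsub t).trans_eq ?_
  exact Finset.prod_congr rfl fun v hv => by rw [hcharFun hv]

lemma norm_charFun_sphAvg_limit_le (hd : 0 < d)
    (hY : ∀ v, HasLaw (Y v) μ P) (hindep : iIndepFun Y P) {H : Ω → ℝ}
    (hH : ∀ᵐ ω ∂P, Tendsto (fun r => sphAvg d Y r ω) atTop (𝓝 (H ω))) (k : ℕ) (t : ℝ) :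
    ‖charFun (P.map H) t‖ ≤
      ‖charFun μ ((#(sphereW d (k + 1)) : ℝ)⁻¹ * t)‖ ^ #(sphereW d (k + 1)) := by
  have := hindep.isProbabilityMeasure
  have hmeas := aemeasurable_sphAvg fun v => (hY v).aemeasurable
  have hlim := (tendsto_add_atTop_iff_nat 1).2 (tendsto_charFun_map_of_ae_tendsto hmeas hH t)
  exact le_of_tendsto hlim.norm (eventually_atTop.2
    ⟨k, fun n hkn => norm_charFun_sphAvg_le hd hY hindep hkn t⟩)

lemma integral_exp_I_mul_eq_charFun_map {X : Ω → ℝ} (hX : AEMeasurable X P) (t : ℝ) :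
    ∫ ω, Complex.exp (Complex.I * t * X ω) ∂P = charFun (P.map X) t := by
  rw [charFun_apply_real, integral_map hX (by fun_prop)]
  congr with ω
  ring_nf

end HeightField

section IntegerLaw

/-- The law on `ℝ` of an integer-valued random variable with probability mass function `p`
(negative values of `p` count as `0`). -/
def intLaw (p : ℤ → ℝ) : Measure ℝ :=
  Measure.sum fun j : ℤ => ENNReal.ofReal (p j) • Measure.dirac (j : ℝ)

lemma hasLaw_intCast_intLaw {Ω : Type*} [MeasurableSpace Ω] {P : Measure Ω} {p : ℤ → ℝ}
    {X : Ω → ℤ} (hX : Measurable X) (hlaw : ∀ j, P {ω | X ω = j} = ENNReal.ofReal (p j)) :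
    HasLaw (fun ω => (X ω : ℝ)) (intLaw p) P where
  aemeasurable := by fun_prop
  map_eq := by
    have hfiber (j : ℤ) : P (X ⁻¹' {j}) = ENNReal.ofReal (p j) := hlaw j
    change P.map ((fun j : ℤ => (j : ℝ)) ∘ X) = _
    rw [← Measure.map_map (by fun_prop) hX, Measure.map_eq_sum P X hX,
      Measure.map_sum (by fun_prop)]
    simp only [hfiber, Measure.map_smul, Measure.map_dirac, intLaw]

lemma ofReal_le_intLaw_singleton (p : ℤ → ℝ) (j : ℤ) :
    ENNReal.ofReal (p j) ≤ intLaw p {(j : ℝ)} := by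
  calc ENNReal.ofReal (p j)
    _ = (ENNReal.ofReal (p j) • Measure.dirac (j : ℝ)) {(j : ℝ)} := by simp
    _ ≤ intLaw p {(j : ℝ)} :=
        Measure.le_sum (fun j : ℤ => ENNReal.ofReal (p j) • Measure.dirac (j : ℝ)) j _

lemma intLaw_ne_dirac {p : ℤ → ℝ} (hp0 : ∀ j, 0 ≤ p j) (hsymm : ∀ j, p (-j) = p j)
    (hmompos : 0 < ∑' j : ℤ, (j : ℝ) ^ 2 * p j) (x : ℝ) : intLaw p ≠ Measure.dirac x := by
  intro h
  have hatom {j : ℤ} (hj : 0 < p j) : x = j := by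
    by_contra hne
    have := ofReal_le_intLaw_singleton p j
    simp [h, hne, hj.not_ge] at this
  obtain ⟨i, hi⟩ : ∃ i : ℤ, (i : ℝ) ^ 2 * p i ≠ 0 := by
    by_contra! hzero
    simp [hzero] at hmompos
  have hi0 : (i : ℝ) ≠ 0 := fun h => hi (by simp [h])
  have hpi : 0 < p i := (hp0 i).lt_of_ne' (right_ne_zero_of_mul hi)
  have hpos : x = i := hatom hpi
  have hneg : x = -i := by simpa using hatom (j := -i) (by rwa [hsymm])
  exact hi0 (by linarith)

end IntegerLaw

theorem free_limit_charfun_exponential_bound_general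
    {Ω : Type*} [MeasurableSpace Ω] {P : Measure Ω} {d : ℕ} (hd : 2 ≤ d)
    {μ : Measure ℝ} (hμ : ∀ x, μ ≠ Measure.dirac x)
    {Y : Vertex d → Ω → ℝ} (hY : ∀ v, HasLaw (Y v) μ P) (hindep : iIndepFun Y P) {H : Ω → ℝ}
    (hH : ∀ᵐ ω ∂P, Tendsto (fun r => sphAvg d Y r ω) atTop (𝓝 (H ω))) :
    ∃ c : ℝ, 0 < c ∧ ∀ t : ℝ,
      ‖∫ ω, Complex.exp (Complex.I * t * H ω) ∂P‖ ≤
        Real.exp (-c * min (t ^ 2) |t|) := by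
  have := hindep.isProbabilityMeasure
  have : IsProbabilityMeasure μ := (hY (0, [])).isProbabilityMeasure_iff.1 inferInstance
  obtain ⟨c, hc, hbound⟩ := exists_norm_charFun_pow_le_exp hμ d.succ_pos hd
  refine ⟨c, hc, fun t => ?_⟩
  obtain ⟨k, hk⟩ := hbound t
  have hHmeas : AEMeasurable H P := aemeasurable_of_tendsto_metrizable_ae'
    (aemeasurable_sphAvg fun v => (hY v).aemeasurable) hH
  rw [integral_exp_I_mul_eq_charFun_map hHmeas]
  refine (norm_charFun_sphAvg_limit_le (by omega) hY hindep hH k t).trans ?_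
  rwa [card_sphereW_succ]

/-- Exponential bound on the characteristic function of the a.s. limit `H`
of the spherical averages of the free height field:
`|E[e^{itH}]| ≤ exp(-c·min(t², |t|))` for some `c > 0`. -/
theorem free_limit_charfun_exponential_bound
    {Ω : Type} [MeasurableSpace Ω] (P : Measure Ω) [IsProbabilityMeasure P]
    (d : ℕ) (hd : 2 ≤ d)
    (p : ℤ → ℝ) (hp0 : ∀ j, 0 ≤ p j) (hpsum : Summable p) (hp1 : ∑' j, p j = 1)
    (hsymm : ∀ j, p (-j) = p j)
    (hmom : Summable (fun j : ℤ => (j : ℝ) ^ 2 * p j))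
    (hmompos : 0 < ∑' j : ℤ, (j : ℝ) ^ 2 * p j)
    (Y : Vertex d → Ω → ℤ) (hmeas : ∀ v, Measurable (Y v))
    (hindep : iIndepFun Y P)
    (hlaw : ∀ v (j : ℤ), P {ω | Y v ω = j} = ENNReal.ofReal (p j))
    (H : Ω → ℝ) (hHmeas : Measurable H)
    (hH : ∀ᵐ ω ∂P, Tendsto (fun r => sphAvg d (fun v ω => (Y v ω : ℝ)) r ω) atTop (𝓝 (H ω))) :
    ∃ c : ℝ, 0 < c ∧ ∀ t : ℝ,
      ‖∫ ω, Complex.exp (Complex.I * t * (H ω : ℝ)) ∂P‖ ≤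
        Real.exp (-c * min (t ^ 2) |t|) :=
  free_limit_charfun_exponential_bound_general hd
    (intLaw_ne_dirac hp0 hsymm hmompos)
    (fun v => hasLaw_intCast_intLaw (hmeas v) (hlaw v))
    (hindep.comp (fun _ j => (j : ℝ)) fun _ => by fun_prop) hH
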